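/- Let H be a quasi-Hopf algebra, A a left H-module algebra, B = A#H the smash product, and j : H → A#H, j(h) = 1_A#h, the canonical morphism of right H-comodule algebras. Then the projection E : B → B, E(b) = j(q¹)b₍₀₎j(βS(q²b₍₁₎)), is given explicitly by E(a#h) = ε(h)(a#1) for all a ∈ A and h ∈ H. -/

import Mathlib

open TensorProduct BigOperators

/-- A quasi-bialgebra in the sense of Drinfeld. -/
structure QuasiBialgebra (k H : Type*) [Field k] [Ring H] [Algebra k H] where
  comul : H →ₐ[k] H ⊗[k] H
  counit : H →ₐ[k] k
  Phi : H ⊗[k] (H ⊗[k] H)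
  PhiInv : H ⊗[k] (H ⊗[k] H)
  Phi_mul_inv : Phi * PhiInv = 1
  inv_mul_Phi : PhiInv * Phi = 1
  comul_coassoc : ∀ h : H,
    (Algebra.TensorProduct.map (AlgHom.id k H) comul) (comul h)
      = Phi * (Algebra.TensorProduct.assoc k k k H H H)
          ((Algebra.TensorProduct.map comul (AlgHom.id k H)) (comul h)) * PhiInv
  counit_comul_right : ∀ h : H,
    (Algebra.TensorProduct.map (AlgHom.id k H) counit) (comul h) = h ⊗ₜ[k] (1 : k)
  counit_comul_left : ∀ h : H,
    (Algebra.TensorProduct.map counit (AlgHom.id k H)) (comul h) = (1 : k) ⊗ₜ[k] h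
  pentagon :
    ((1 : H) ⊗ₜ[k] Phi)
      * (Algebra.TensorProduct.map (AlgHom.id k H)
          (((Algebra.TensorProduct.assoc k k k H H H).toAlgHom).comp
            (Algebra.TensorProduct.map comul (AlgHom.id k H)))) Phi
      * (Algebra.TensorProduct.map (AlgHom.id k H)
          (Algebra.TensorProduct.map (AlgHom.id k H)
            (Algebra.TensorProduct.includeLeft : H →ₐ[k] H ⊗[k] H))) Phi
    = (Algebra.TensorProduct.map (AlgHom.id k H)
          (Algebra.TensorProduct.map (AlgHom.id k H) comul)) Phi
      * (Algebra.TensorProduct.assoc k k k H H (H ⊗[k] H))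
          ((Algebra.TensorProduct.map comul (AlgHom.id k (H ⊗[k] H))) Phi)
  counit_Phi : (Algebra.TensorProduct.map (AlgHom.id k H)
      (Algebra.TensorProduct.map counit (AlgHom.id k H))) Phi = 1

/-- A quasi-Hopf algebra: a quasi-bialgebra with antipode `S` (a bijective algebra
anti-automorphism with inverse `Sinv`) and elements `alpha`, `beta`, normalized so that
`counit alpha = counit beta = 1`.  Identities involving Sweedler components are stated
universally over all finite representations of the relevant tensors. -/
structure QuasiHopfAlgebra (k H : Type*) [Field k] [Ring H] [Algebra k H] extends
    QuasiBialgebra k H where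
  alpha : H
  beta : H
  S : H →ₗ[k] H
  Sinv : H →ₗ[k] H
  S_one : S 1 = 1
  S_mul : ∀ a b : H, S (a * b) = S b * S a
  Sinv_S : ∀ h : H, Sinv (S h) = h
  S_Sinv : ∀ h : H, S (Sinv h) = h
  antipode_left : ∀ h : H, ∀ (n : ℕ) (d1 d2 : Fin n → H),
    comul h = ∑ i, d1 i ⊗ₜ[k] d2 i →
    ∑ i, S (d1 i) * alpha * d2 i = counit h • alpha
  antipode_right : ∀ h : H, ∀ (n : ℕ) (d1 d2 : Fin n → H),
    comul h = ∑ i, d1 i ⊗ₜ[k] d2 i →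
    ∑ i, d1 i * beta * S (d2 i) = counit h • beta
  antipode_Phi : ∀ (n : ℕ) (X1 X2 X3 : Fin n → H),
    Phi = ∑ i, X1 i ⊗ₜ[k] (X2 i ⊗ₜ[k] X3 i) →
    ∑ i, X1 i * beta * S (X2 i) * alpha * X3 i = 1
  antipode_PhiInv : ∀ (n : ℕ) (x1 x2 x3 : Fin n → H),
    PhiInv = ∑ i, x1 i ⊗ₜ[k] (x2 i ⊗ₜ[k] x3 i) →
    ∑ i, S (x1 i) * alpha * x2 i * beta * S (x3 i) = 1
  counit_alpha : counit alpha = 1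
  counit_beta : counit beta = 1

/-- A left `H`-module algebra over a quasi-bialgebra `Q` (the Sweedler-type identities are
stated universally over finite representations of the relevant tensors). -/
structure LeftModuleAlgebra {k H : Type*} [Field k] [Ring H] [Algebra k H]
    (Q : QuasiBialgebra k H) (A : Type*) [AddCommGroup A] [Module k A] where
  act : H →ₗ[k] A →ₗ[k] A
  act_one : ∀ a : A, act 1 a = a
  act_mul : ∀ (g h : H) (a : A), act (g * h) a = act g (act h a)
  mul : A →ₗ[k] A →ₗ[k] A
  one : A
  one_mul : ∀ a : A, mul one a = a
  mul_one : ∀ a : A, mul a one = a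
  act_unit : ∀ h : H, act h one = Q.counit h • one
  mul_assoc : ∀ (a b c : A) (n : ℕ) (X1 X2 X3 : Fin n → H),
    Q.Phi = ∑ i, X1 i ⊗ₜ[k] (X2 i ⊗ₜ[k] X3 i) →
    mul (mul a b) c = ∑ i, mul (act (X1 i) a) (mul (act (X2 i) b) (act (X3 i) c))
  act_distrib : ∀ (h : H) (a b : A) (m : ℕ) (d1 d2 : Fin m → H),
    Q.comul h = ∑ j, d1 j ⊗ₜ[k] d2 j →
    act h (mul a b) = ∑ j, mul (act (d1 j) a) (act (d2 j) b)

/-- `mulB` is the multiplication of the smash product `A # H`: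
`(a # h)(a' # h') = (x¹·a)(x²h₁·a') # x³h₂h'`. -/
def IsSmashMul {k H A : Type*} [Field k] [Ring H] [Algebra k H]
    [AddCommGroup A] [Module k A] (Q : QuasiBialgebra k H) (M : LeftModuleAlgebra Q A)
    (mulB : (A ⊗[k] H) →ₗ[k] (A ⊗[k] H) →ₗ[k] (A ⊗[k] H)) : Prop :=
  ∀ (a a' : A) (h h' : H) (n : ℕ) (x1 x2 x3 : Fin n → H),
    Q.PhiInv = ∑ i, x1 i ⊗ₜ[k] (x2 i ⊗ₜ[k] x3 i) →
    ∀ (m : ℕ) (d1 d2 : Fin m → H), Q.comul h = ∑ j, d1 j ⊗ₜ[k] d2 j →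
    mulB (a ⊗ₜ[k] h) (a' ⊗ₜ[k] h')
      = ∑ i, ∑ j, (M.mul (M.act (x1 i) a) (M.act (x2 i * d1 j) a')) ⊗ₜ[k] (x3 i * d2 j * h')

/-- `coactB` is the right `H`-coaction of the smash product `A # H`:
`ρ(a # h) = (x¹·a # x²h₁) ⊗ x³h₂`. -/
def IsSmashCoact {k H A : Type*} [Field k] [Ring H] [Algebra k H]
    [AddCommGroup A] [Module k A] (Q : QuasiBialgebra k H) (M : LeftModuleAlgebra Q A)
    (coactB : (A ⊗[k] H) →ₗ[k] (A ⊗[k] H) ⊗[k] H) : Prop :=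
  ∀ (a : A) (h : H) (n : ℕ) (x1 x2 x3 : Fin n → H),
    Q.PhiInv = ∑ i, x1 i ⊗ₜ[k] (x2 i ⊗ₜ[k] x3 i) →
    ∀ (m : ℕ) (d1 d2 : Fin m → H), Q.comul h = ∑ j, d1 j ⊗ₜ[k] d2 j →
    coactB (a ⊗ₜ[k] h) = ∑ i, ∑ j, ((M.act (x1 i) a) ⊗ₜ[k] (x2 i * d1 j)) ⊗ₜ[k] (x3 i * d2 j)

/-!
For fixed `a`, the products and the coaction entering `E(a # h)` take place in the image of the
map `x ⊗ y ↦ x · a # y`, since left multiplication by `j(g)` corresponds to left multiplication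
by `Δ(g)` in `H ⊗ H`, and right multiplication by `j(g)` to right multiplication by `1 ⊗ g`. So
`E(a # h)` is the image of `Δ(q¹) (y¹ ⊗ y²βS(y³)) (1 ⊗ S(q²))` with `y = Φ⁻¹(1 ⊗ Δ(h))`, and the
antipode identity for `β` turns the middle factor into `ε(h) p_R`, where `p_R = x¹ ⊗ x²βS(x³)`. It
remains to see that `Δ(q¹) p_R (1 ⊗ S(q²)) = 1 ⊗ 1`, which follows by moving `Φ ⊗ 1` to the
other side of the pentagon and contracting the last three legs with `x ⊗ y ⊗ z ↦ xβS(y)αz`.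
-/

theorem exists_sum_tmul_tmul_eq {R M N P : Type*} [CommSemiring R] [AddCommMonoid M] [Module R M]
    [AddCommMonoid N] [Module R N] [AddCommMonoid P] [Module R P] (t : M ⊗[R] (N ⊗[R] P)) :
    ∃ (n : ℕ) (x : Fin n → M) (y : Fin n → N) (z : Fin n → P),
      t = ∑ i, x i ⊗ₜ[R] (y i ⊗ₜ[R] z i) := by
  obtain ⟨n, u, z, h⟩ :=
    TensorProduct.exists_sum_tmul_eq ((TensorProduct.assoc R M N P).symm t)
  choose m x y hu using fun i => TensorProduct.exists_sum_tmul_eq (u i)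
  let e := (finSigmaFinEquiv (n := m)).symm
  refine ⟨_, fun i => x _ (e i).2, fun i => y _ (e i).2, fun i => z (e i).1, ?_⟩
  rw [e.sum_comp (fun p => x p.1 p.2 ⊗ₜ[R] (y p.1 p.2 ⊗ₜ[R] z p.1)), Fintype.sum_sigma,
    ← (TensorProduct.assoc R M N P).symm.injective.eq_iff, h]
  simp only [hu, TensorProduct.sum_tmul, map_sum, TensorProduct.assoc_symm_tmul]

section LTensor

variable {R B U V W : Type*} [CommSemiring R] [Semiring B] [Algebra R B] [Semiring U]
  [Algebra R U] [Semiring V] [Algebra R V] [Semiring W] [Algebra R W]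

theorem lTensor_map_mul {f : U →ₐ[R] V} {e : U →ₐ[R] W} {φ : V →ₗ[R] W}
    (h : ∀ u v, φ (f u * v) = e u * φ v) (s : B ⊗[R] U) (t : B ⊗[R] V) :
    φ.lTensor B (Algebra.TensorProduct.map (AlgHom.id R B) f s * t)
      = Algebra.TensorProduct.map (AlgHom.id R B) e s * φ.lTensor B t := by
  obtain ⟨n, a, u, rfl⟩ := TensorProduct.exists_sum_tmul_eq s
  obtain ⟨m, b, v, rfl⟩ := TensorProduct.exists_sum_tmul_eq t
  simp [Finset.sum_mul, Finset.mul_sum, h]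

theorem lTensor_mul_map {f : U →ₐ[R] V} {e : U →ₐ[R] W} {φ : V →ₗ[R] W}
    (h : ∀ v u, φ (v * f u) = φ v * e u) (t : B ⊗[R] V) (s : B ⊗[R] U) :
    φ.lTensor B (t * Algebra.TensorProduct.map (AlgHom.id R B) f s)
      = φ.lTensor B t * Algebra.TensorProduct.map (AlgHom.id R B) e s := by
  obtain ⟨n, a, u, rfl⟩ := TensorProduct.exists_sum_tmul_eq s
  obtain ⟨m, b, v, rfl⟩ := TensorProduct.exists_sum_tmul_eq t
  simp [Finset.sum_mul, Finset.mul_sum, h]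

end LTensor

namespace QuasiBialgebra

variable {k H V W : Type*} [Field k] [Ring H] [Algebra k H] [Ring V] [Algebra k V]
  [Ring W] [Algebra k W] (Q : QuasiBialgebra k H)

theorem isUnit_Phi : IsUnit Q.Phi :=
  ⟨⟨Q.Phi, Q.PhiInv, Q.Phi_mul_inv, Q.inv_mul_Phi⟩, rfl⟩

theorem map_PhiInv_eq_one (f : H ⊗[k] (H ⊗[k] H) →ₐ[k] V) (hf : f Q.Phi = 1) :
    f Q.PhiInv = 1 := by
  simpa only [map_mul, map_one, hf, one_mul] using congrArg f Q.Phi_mul_inv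

theorem mul_map_PhiInv_eq_of_eq (f g : H ⊗[k] (H ⊗[k] H) →ₐ[k] V) {v w : V}
    (h : v * f Q.Phi = g Q.Phi * w) : w * f Q.PhiInv = g Q.PhiInv * v := by
  have hf : f Q.Phi * f Q.PhiInv = 1 := by rw [← map_mul, Q.Phi_mul_inv, map_one]
  have hg : g Q.PhiInv * g Q.Phi = 1 := by rw [← map_mul, Q.inv_mul_Phi, map_one]
  calc w * f Q.PhiInv = g Q.PhiInv * (g Q.Phi * w) * f Q.PhiInv := by
        rw [← mul_assoc, hg, one_mul]
    _ = g Q.PhiInv * v := by rw [← h, mul_assoc, mul_assoc, hf, mul_one]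

variable (V) in
/-- The algebra map `ε ⊗ id : H ⊗ V → k ⊗ V = V`. -/
noncomputable def counitLeft : H ⊗[k] V →ₐ[k] V :=
  (Algebra.TensorProduct.lid k V).toAlgHom.comp
    (Algebra.TensorProduct.map Q.counit (AlgHom.id k V))

variable (V) in
/-- The algebra map `id ⊗ ε : V ⊗ H → V ⊗ k = V`. -/
noncomputable def counitRight : V ⊗[k] H →ₐ[k] V :=
  (Algebra.TensorProduct.rid k k V).toAlgHom.comp
    (Algebra.TensorProduct.map (AlgHom.id k V) Q.counit)

variable (V) in
/-- The algebra map `Δ ⊗ id : H ⊗ V → H ⊗ (H ⊗ V)`, with its values bracketed to the right. -/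
noncomputable def comulLeft : H ⊗[k] V →ₐ[k] H ⊗[k] (H ⊗[k] V) :=
  (Algebra.TensorProduct.assoc k k k H H V).toAlgHom.comp
    (Algebra.TensorProduct.map Q.comul (AlgHom.id k V))

@[simp]
theorem counitLeft_tmul (h : H) (v : V) : Q.counitLeft V (h ⊗ₜ v) = Q.counit h • v := by
  simp [counitLeft]

@[simp]
theorem counitRight_tmul (v : V) (h : H) : Q.counitRight V (v ⊗ₜ h) = Q.counit h • v := by
  simp [counitRight]

@[simp]
theorem comulLeft_tmul (h : H) (v : V) :
    Q.comulLeft V (h ⊗ₜ v) = Algebra.TensorProduct.assoc k k k H H V (Q.comul h ⊗ₜ v) := by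
  simp [comulLeft]

@[simp]
theorem counitLeft_comul (h : H) : Q.counitLeft H (Q.comul h) = h := by
  simp [counitLeft, Q.counit_comul_left]

@[simp]
theorem counitRight_comul (h : H) : Q.counitRight H (Q.comul h) = h := by
  simp [counitRight, Q.counit_comul_right]

theorem counitLeft_comp_map (f : V →ₐ[k] W) :
    (Q.counitLeft W).comp (Algebra.TensorProduct.map (AlgHom.id k H) f)
      = f.comp (Q.counitLeft V) :=
  Algebra.TensorProduct.ext' fun h v => by simp

theorem counitLeft_assoc (t : H ⊗[k] W) (v : V) :
    Q.counitLeft (W ⊗[k] V) (Algebra.TensorProduct.assoc k k k H W V (t ⊗ₜ v))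
      = Q.counitLeft W t ⊗ₜ v := by
  induction t with
  | zero => simp
  | tmul h w => simp [TensorProduct.smul_tmul']
  | add s t hs ht => simp only [TensorProduct.add_tmul, map_add, hs, ht]

theorem map_counitLeft_assoc (t : W ⊗[k] H) (v : V) :
    Algebra.TensorProduct.map (AlgHom.id k W) (Q.counitLeft V)
        (Algebra.TensorProduct.assoc k k k W H V (t ⊗ₜ v))
      = Q.counitRight W t ⊗ₜ v := by
  induction t with
  | zero => simp
  | tmul w h => simp [TensorProduct.smul_tmul']
  | add s t hs ht => simp only [TensorProduct.add_tmul, map_add, hs, ht]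

theorem counitLeft_comp_comulLeft :
    (Q.counitLeft (H ⊗[k] V)).comp (Q.comulLeft V) = AlgHom.id k (H ⊗[k] V) :=
  Algebra.TensorProduct.ext' fun h v => by simp [counitLeft_assoc]

theorem map_counitLeft_comp_comulLeft :
    (Algebra.TensorProduct.map (AlgHom.id k H) (Q.counitLeft V)).comp (Q.comulLeft V)
      = AlgHom.id k (H ⊗[k] V) :=
  Algebra.TensorProduct.ext' fun h v => by simp [map_counitLeft_assoc]

theorem comulLeft_comp_map (f : V →ₐ[k] W) :
    (Algebra.TensorProduct.map (AlgHom.id k H) (Algebra.TensorProduct.map (AlgHom.id k H) f)).comp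
        (Q.comulLeft V)
      = (Q.comulLeft W).comp (Algebra.TensorProduct.map (AlgHom.id k H) f) := by
  refine Algebra.TensorProduct.ext' fun h v => ?_
  simp only [AlgHom.comp_apply, comulLeft_tmul, Algebra.TensorProduct.map_tmul, AlgHom.id_apply]
  induction Q.comul h with
  | zero => simp
  | tmul x y => simp
  | add s t hs ht => simp only [TensorProduct.add_tmul, map_add, hs, ht]

theorem counitRight_comp_includeLeft :
    (Q.counitRight V).comp Algebra.TensorProduct.includeLeft = AlgHom.id k V :=
  AlgHom.ext fun v => by simp

theorem map_counitLeft_comp_includeLeft :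
    Algebra.TensorProduct.map (AlgHom.id k V)
        ((Q.counitLeft W).comp (Algebra.TensorProduct.includeLeft : H →ₐ[k] H ⊗[k] W))
      = Algebra.TensorProduct.includeLeft.comp (Q.counitRight V) :=
  Algebra.TensorProduct.ext' fun v h => by simp [TensorProduct.smul_tmul']

theorem pentagon_comulLeft :
    (1 ⊗ₜ[k] Q.Phi) * Algebra.TensorProduct.map (AlgHom.id k H) (Q.comulLeft H) Q.Phi
        * Algebra.TensorProduct.map (AlgHom.id k H) (Algebra.TensorProduct.map (AlgHom.id k H)
            (Algebra.TensorProduct.includeLeft : H →ₐ[k] H ⊗[k] H)) Q.Phi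
      = Algebra.TensorProduct.map (AlgHom.id k H)
            (Algebra.TensorProduct.map (AlgHom.id k H) Q.comul) Q.Phi
          * Q.comulLeft (H ⊗[k] H) Q.Phi :=
  Q.pentagon

theorem map_counitLeft_Phi :
    Algebra.TensorProduct.map (AlgHom.id k H) (Q.counitLeft H) Q.Phi = 1 := by
  have h := congrArg (Algebra.TensorProduct.map (AlgHom.id k H)
    (Algebra.TensorProduct.lid k H).toAlgHom) Q.counit_Phi
  rwa [map_one, ← AlgHom.comp_apply, ← Algebra.TensorProduct.map_comp] at h

theorem map_comp_counitLeft_Phi (f : H →ₐ[k] V) :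
    Algebra.TensorProduct.map (AlgHom.id k H) (f.comp (Q.counitLeft H)) Q.Phi = 1 := by
  rw [← (AlgHom.id k H).comp_id, Algebra.TensorProduct.map_comp, AlgHom.comp_apply,
    map_counitLeft_Phi, map_one]

-- Apply `id ⊗ ε ⊗ id ⊗ id` to the pentagon: it becomes `(1 ⊗ (ε ⊗ id ⊗ id)Φ) Φ = Φ`.
theorem counitLeft_Phi : Q.counitLeft (H ⊗[k] H) Q.Phi = 1 := by
  have h := congrArg (Algebra.TensorProduct.map (AlgHom.id k H) (Q.counitLeft (H ⊗[k] H)))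
    Q.pentagon_comulLeft
  simp only [map_mul, ← AlgHom.comp_apply, map_counitLeft_comp_comulLeft,
    ← Algebra.TensorProduct.map_comp, AlgHom.id_comp, counitLeft_comp_comulLeft,
    counitLeft_comp_map, map_comp_counitLeft_Phi, Algebra.TensorProduct.map_id,
    AlgHom.id_apply, Algebra.TensorProduct.map_tmul, mul_one, one_mul] at h
  simpa using congrArg (Q.counitLeft (H ⊗[k] H)) (Q.isUnit_Phi.mul_eq_right.1 h)

-- Apply `id ⊗ id ⊗ ε ⊗ id` to the pentagon: it becomes `Φ ((id ⊗ id ⊗ ε)Φ ⊗ 1) = Φ`.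
theorem map_counitRight_Phi :
    Algebra.TensorProduct.map (AlgHom.id k H) (Q.counitRight H) Q.Phi = 1 := by
  have h := congrArg (Algebra.TensorProduct.map (AlgHom.id k H)
    (Algebra.TensorProduct.map (AlgHom.id k H) (Q.counitLeft H))) Q.pentagon_comulLeft
  have counitLeft_Phi_tail : Algebra.TensorProduct.map (AlgHom.id k H)
      (Algebra.TensorProduct.map (AlgHom.id k H) (Q.counitLeft H)) (1 ⊗ₜ Q.Phi) = 1 := by
    rw [Algebra.TensorProduct.map_tmul, map_counitLeft_Phi, map_one,
      ← Algebra.TensorProduct.one_def]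
  have counitLeft_comp_comul : (Q.counitLeft H).comp Q.comul = AlgHom.id k H :=
    AlgHom.ext Q.counitLeft_comul
  simp only [map_mul, counitLeft_Phi_tail, ← AlgHom.comp_apply, comulLeft_comp_map,
    map_counitLeft_comp_comulLeft, ← Algebra.TensorProduct.map_comp, AlgHom.id_comp,
    counitLeft_comp_comul, Algebra.TensorProduct.map_id, AlgHom.id_apply, one_mul] at h
  rw [AlgHom.comp_apply, map_counitLeft_Phi, map_one, mul_one, map_counitLeft_comp_includeLeft] at h
  have h' := congrArg (Algebra.TensorProduct.map (AlgHom.id k H) (Q.counitRight H))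
    (Q.isUnit_Phi.mul_eq_left.1 h)
  rwa [map_one, ← AlgHom.comp_apply, ← Algebra.TensorProduct.map_comp, ← AlgHom.comp_assoc,
    counitRight_comp_includeLeft, AlgHom.id_comp, AlgHom.id_comp] at h'

end QuasiBialgebra

namespace QuasiHopfAlgebra

variable {k H : Type*} [Field k] [Ring H] [Algebra k H] (Q : QuasiHopfAlgebra k H)

/-- The contraction `x ⊗ y ↦ S(x) α y`. -/
noncomputable def alphaContract : H ⊗[k] H →ₗ[k] H :=
  LinearMap.mul' k H ∘ₗ TensorProduct.map (LinearMap.mulRight k Q.alpha ∘ₗ Q.S) LinearMap.id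

/-- The contraction `x ⊗ y ↦ x β S(y)`. -/
noncomputable def betaContract : H ⊗[k] H →ₗ[k] H :=
  LinearMap.mul' k H ∘ₗ TensorProduct.map (LinearMap.mulRight k Q.beta) Q.S

/-- The contraction `x ⊗ y ⊗ z ↦ x β S(y) α z`. -/
noncomputable def betaAlphaContract : H ⊗[k] (H ⊗[k] H) →ₗ[k] H :=
  LinearMap.mul' k H ∘ₗ TensorProduct.map (LinearMap.mulRight k Q.beta) Q.alphaContract

/-- The element `p_R = x¹ ⊗ x² β S(x³)` of `H ⊗ H`. -/
noncomputable def pR : H ⊗[k] H :=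
  Q.betaContract.lTensor H Q.PhiInv

@[simp]
theorem alphaContract_tmul (x y : H) : Q.alphaContract (x ⊗ₜ y) = Q.S x * Q.alpha * y := by
  simp [alphaContract]

@[simp]
theorem betaContract_tmul (x y : H) : Q.betaContract (x ⊗ₜ y) = x * Q.beta * Q.S y := by
  simp [betaContract]

@[simp]
theorem betaAlphaContract_tmul (x : H) (t : H ⊗[k] H) :
    Q.betaAlphaContract (x ⊗ₜ t) = x * Q.beta * Q.alphaContract t := by
  simp [betaAlphaContract]

theorem betaAlphaContract_assoc (t : H ⊗[k] H) (z : H) :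
    Q.betaAlphaContract (Algebra.TensorProduct.assoc k k k H H H (t ⊗ₜ z))
      = Q.betaContract t * Q.alpha * z := by
  induction t with
  | zero => simp
  | tmul x y => simp [mul_assoc]
  | add s t hs ht => simp only [TensorProduct.add_tmul, map_add, add_mul, hs, ht]

theorem betaAlphaContract_Phi : Q.betaAlphaContract Q.Phi = 1 := by
  obtain ⟨n, X1, X2, X3, hX⟩ := exists_sum_tmul_tmul_eq Q.Phi
  rw [← Q.antipode_Phi n X1 X2 X3 hX, hX]
  simp [mul_assoc]

theorem alphaContract_comul (h : H) : Q.alphaContract (Q.comul h) = Q.counit h • Q.alpha := by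
  obtain ⟨n, h1, h2, hh⟩ := TensorProduct.exists_sum_tmul_eq (Q.comul h)
  simp [← Q.antipode_left h n h1 h2 hh, hh]

theorem betaContract_comul (h : H) : Q.betaContract (Q.comul h) = Q.counit h • Q.beta := by
  obtain ⟨n, h1, h2, hh⟩ := TensorProduct.exists_sum_tmul_eq (Q.comul h)
  simp [← Q.antipode_right h n h1 h2 hh, hh]

theorem alphaContract_mul_tmul (t : H ⊗[k] H) (x y : H) :
    Q.alphaContract (t * (x ⊗ₜ y)) = Q.S x * Q.alphaContract t * y := by
  induction t with
  | zero => simp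
  | tmul a b => simp [Q.S_mul, mul_assoc]
  | add s t hs ht => simp only [add_mul, mul_add, map_add, hs, ht]

theorem betaContract_tmul_mul (x y : H) (t : H ⊗[k] H) :
    Q.betaContract ((x ⊗ₜ y) * t) = x * Q.betaContract t * Q.S y := by
  induction t with
  | zero => simp
  | tmul a b => simp [Q.S_mul, mul_assoc]
  | add s t hs ht => simp only [add_mul, mul_add, map_add, hs, ht]

theorem alphaContract_comul_mul (h : H) (t : H ⊗[k] H) :
    Q.alphaContract (Q.comul h * t) = Q.counit h • Q.alphaContract t := by
  induction t with
  | zero => simp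
  | tmul x y => simp [alphaContract_mul_tmul, alphaContract_comul]
  | add s t hs ht => simp only [mul_add, map_add, smul_add, hs, ht]

theorem betaContract_mul_comul (t : H ⊗[k] H) (h : H) :
    Q.betaContract (t * Q.comul h) = Q.counit h • Q.betaContract t := by
  induction t with
  | zero => simp
  | tmul x y => simp [betaContract_tmul_mul, betaContract_comul]
  | add s t hs ht => simp only [add_mul, map_add, smul_add, hs, ht]

theorem betaAlphaContract_map_comul_mul (t : H ⊗[k] H) (w : H ⊗[k] (H ⊗[k] H)) :
    Q.betaAlphaContract (Algebra.TensorProduct.map (AlgHom.id k H) Q.comul t * w)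
      = Q.counitRight H t * Q.betaAlphaContract w := by
  induction t with
  | zero => simp
  | add s t hs ht => simp only [add_mul, map_add, hs, ht]
  | tmul x h =>
    induction w with
    | zero => simp
    | add v w hv hw => simp only [mul_add, map_add, hv, hw]
    | tmul y t => simp [alphaContract_comul_mul, mul_assoc]

theorem betaAlphaContract_mul_comulLeft (w : H ⊗[k] (H ⊗[k] H)) (t : H ⊗[k] H) :
    Q.betaAlphaContract (w * Q.comulLeft H t)
      = Q.betaAlphaContract w * Q.counitLeft H t := by
  obtain ⟨u, rfl⟩ := (Algebra.TensorProduct.assoc k k k H H H).surjective w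
  induction t with
  | zero => simp
  | add s t hs ht => simp only [mul_add, map_add, hs, ht]
  | tmul h z =>
    induction u with
    | zero => simp
    | add u v hu hv => simp only [add_mul, map_add, hu, hv]
    | tmul s y =>
      rw [QuasiBialgebra.comulLeft_tmul, ← map_mul, Algebra.TensorProduct.tmul_mul_tmul]
      simp [betaAlphaContract_assoc, betaContract_mul_comul, mul_assoc]

theorem lTensor_betaAlphaContract_assoc_mul (t : H ⊗[k] H) (y z : H) (P : H ⊗[k] (H ⊗[k] H)) :
    Q.betaAlphaContract.lTensor H
        (Algebra.TensorProduct.assoc k k k H H (H ⊗[k] H) (t ⊗ₜ (y ⊗ₜ z))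
          * Algebra.TensorProduct.map (AlgHom.id k H) (Algebra.TensorProduct.map (AlgHom.id k H)
            (Algebra.TensorProduct.includeLeft : H →ₐ[k] H ⊗[k] H)) P)
      = t * Q.betaContract.lTensor H P * (1 ⊗ₜ (Q.S y * Q.alpha * z)) := by
  obtain ⟨n, a, b, c, rfl⟩ := exists_sum_tmul_tmul_eq P
  obtain ⟨m, d, e, rfl⟩ := TensorProduct.exists_sum_tmul_eq t
  simp [TensorProduct.sum_tmul, Finset.sum_mul, Finset.mul_sum, Q.S_mul, mul_assoc]

theorem comulLeft_Phi_mul_map_includeLeft_PhiInv :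
    Q.comulLeft (H ⊗[k] H) Q.Phi
        * Algebra.TensorProduct.map (AlgHom.id k H) (Algebra.TensorProduct.map (AlgHom.id k H)
            (Algebra.TensorProduct.includeLeft : H →ₐ[k] H ⊗[k] H)) Q.PhiInv
      = Algebra.TensorProduct.map (AlgHom.id k H)
            (Algebra.TensorProduct.map (AlgHom.id k H) Q.comul) Q.PhiInv
          * ((1 ⊗ₜ[k] Q.Phi)
            * Algebra.TensorProduct.map (AlgHom.id k H) (Q.comulLeft H) Q.Phi) :=
  Q.mul_map_PhiInv_eq_of_eq _ _ Q.pentagon_comulLeft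

-- This is `Δ(q¹) p_R (1 ⊗ S(q²)) = 1 ⊗ 1` with `q_R = X¹ ⊗ S⁻¹(αX³)X²` written out.
theorem sum_comul_mul_pR_mul {n : ℕ} {X1 X2 X3 : Fin n → H}
    (hX : Q.Phi = ∑ i, X1 i ⊗ₜ[k] (X2 i ⊗ₜ[k] X3 i)) :
    ∑ i, Q.comul (X1 i) * Q.pR * (1 ⊗ₜ (Q.S (X2 i) * Q.alpha * X3 i)) = 1 := by
  have h := congrArg (Q.betaAlphaContract.lTensor H) Q.comulLeft_Phi_mul_map_includeLeft_PhiInv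
  rw [lTensor_map_mul Q.betaAlphaContract_map_comul_mul,
    lTensor_mul_map Q.betaAlphaContract_mul_comulLeft,
    Q.map_PhiInv_eq_one _ Q.map_counitRight_Phi, Q.map_counitLeft_Phi, LinearMap.lTensor_tmul,
    betaAlphaContract_Phi, ← Algebra.TensorProduct.one_def, mul_one, one_mul, hX] at h
  simpa only [map_sum, Finset.sum_mul, QuasiBialgebra.comulLeft_tmul,
    lTensor_betaAlphaContract_assoc_mul, pR] using h

theorem lTensor_betaContract_mul_tmul_comul (P : H ⊗[k] (H ⊗[k] H)) (h : H) :
    Q.betaContract.lTensor H (P * (1 ⊗ₜ Q.comul h))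
      = Q.counit h • Q.betaContract.lTensor H P := by
  induction P with
  | zero => simp
  | tmul x t => simp [betaContract_mul_comul]
  | add P R hP hR => simp only [add_mul, map_add, smul_add, hP, hR]

end QuasiHopfAlgebra

namespace LeftModuleAlgebra

variable {k H A : Type*} [Field k] [Ring H] [Algebra k H] [AddCommGroup A] [Module k A]
  {Q : QuasiBialgebra k H} (M : LeftModuleAlgebra Q A)

/-- The orbit map `x ⊗ y ↦ x · a # y` of an element `a` of `A`, through which the structure maps
of the smash product are computed inside `H ⊗ H`. -/
noncomputable def smashOrbit (a : A) : H ⊗[k] H →ₗ[k] A ⊗[k] H :=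
  (M.act.flip a).rTensor H

/-- The map `x ⊗ y ↦ (x · a)(y · b)`. -/
noncomputable def actMul (a b : A) : H ⊗[k] H →ₗ[k] A :=
  TensorProduct.lift (M.mul.compl₁₂ (M.act.flip a) (M.act.flip b))

theorem smashOrbit_tmul (a : A) (x y : H) : M.smashOrbit a (x ⊗ₜ y) = M.act x a ⊗ₜ y := rfl

@[simp]
theorem actMul_tmul (a b : A) (x y : H) :
    M.actMul a b (x ⊗ₜ y) = M.mul (M.act x a) (M.act y b) := rfl

@[simp]
theorem smashOrbit_one (a : A) : M.smashOrbit a 1 = a ⊗ₜ 1 := by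
  rw [Algebra.TensorProduct.one_def, smashOrbit_tmul, M.act_one]

theorem smashOrbit_act (a : A) (x y : H) (t : H ⊗[k] H) :
    M.smashOrbit (M.act x a) (t * (1 ⊗ₜ y)) = M.smashOrbit a (t * (x ⊗ₜ y)) := by
  induction t with
  | zero => simp
  | tmul b c => simp [M.smashOrbit_tmul, M.act_mul]
  | add s t hs ht => simp only [add_mul, map_add, hs, ht]

theorem map_actMul_one_right (a : A) (g : H) (P : H ⊗[k] (H ⊗[k] H)) :
    TensorProduct.map (M.actMul a M.one) (LinearMap.mulRight k g)
        ((Algebra.TensorProduct.assoc k k k H H H).symm P)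
      = M.smashOrbit a
          (Algebra.TensorProduct.map (AlgHom.id k H) (Q.counitLeft H) P * (1 ⊗ₜ g)) := by
  obtain ⟨n, x, y, z, rfl⟩ := exists_sum_tmul_tmul_eq P
  simp [Finset.sum_mul, M.smashOrbit_tmul, M.act_unit, M.mul_one, TensorProduct.smul_tmul']

theorem map_actMul_one_left (b : A) (g : H) (P : H ⊗[k] (H ⊗[k] H)) :
    TensorProduct.map (M.actMul M.one b) (LinearMap.mulRight k g)
        ((Algebra.TensorProduct.assoc k k k H H H).symm P)
      = M.smashOrbit b (Q.counitLeft (H ⊗[k] H) P * (1 ⊗ₜ g)) := by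
  obtain ⟨n, x, y, z, rfl⟩ := exists_sum_tmul_tmul_eq P
  simp [Finset.sum_mul, M.smashOrbit_tmul, M.act_unit, M.one_mul, TensorProduct.smul_tmul']

end LeftModuleAlgebra

section SmashProduct

variable {k H A : Type*} [Field k] [Ring H] [Algebra k H] [AddCommGroup A] [Module k A]
  {Q : QuasiBialgebra k H} {M : LeftModuleAlgebra Q A}

theorem IsSmashCoact.apply_tmul {coactB : (A ⊗[k] H) →ₗ[k] (A ⊗[k] H) ⊗[k] H}
    (hcoactB : IsSmashCoact Q M coactB) (a : A) (h : H) :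
    coactB (a ⊗ₜ h) = (M.smashOrbit a).rTensor H
      ((Algebra.TensorProduct.assoc k k k H H H).symm (Q.PhiInv * (1 ⊗ₜ Q.comul h))) := by
  obtain ⟨n, x1, x2, x3, hx⟩ := exists_sum_tmul_tmul_eq Q.PhiInv
  obtain ⟨m, h1, h2, hh⟩ := TensorProduct.exists_sum_tmul_eq (Q.comul h)
  rw [hcoactB a h n x1 x2 x3 hx m h1 h2 hh, hx, hh]
  simp only [Finset.sum_mul, Finset.mul_sum, TensorProduct.tmul_sum, map_sum,
    Algebra.TensorProduct.tmul_mul_tmul, mul_one, Algebra.TensorProduct.assoc_symm_tmul,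
    LinearMap.rTensor_tmul, LeftModuleAlgebra.smashOrbit_tmul]
  exact Finset.sum_comm

namespace IsSmashMul

variable {mulB : (A ⊗[k] H) →ₗ[k] (A ⊗[k] H) →ₗ[k] (A ⊗[k] H)}

theorem apply_tmul_tmul (hmulB : IsSmashMul Q M mulB) (a b : A) (h g : H) :
    mulB (a ⊗ₜ h) (b ⊗ₜ g) = TensorProduct.map (M.actMul a b) (LinearMap.mulRight k g)
      ((Algebra.TensorProduct.assoc k k k H H H).symm (Q.PhiInv * (1 ⊗ₜ Q.comul h))) := by
  obtain ⟨n, x1, x2, x3, hx⟩ := exists_sum_tmul_tmul_eq Q.PhiInv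
  obtain ⟨m, h1, h2, hh⟩ := TensorProduct.exists_sum_tmul_eq (Q.comul h)
  rw [hmulB a b h g n x1 x2 x3 hx m h1 h2 hh, hx, hh]
  simp only [Finset.sum_mul, Finset.mul_sum, TensorProduct.tmul_sum, map_sum,
    Algebra.TensorProduct.tmul_mul_tmul, mul_one, Algebra.TensorProduct.assoc_symm_tmul,
    TensorProduct.map_tmul, LeftModuleAlgebra.actMul_tmul, LinearMap.mulRight_apply]
  exact Finset.sum_comm

theorem apply_tmul_one (hmulB : IsSmashMul Q M mulB) (a : A) (h g : H) :
    mulB (a ⊗ₜ h) (M.one ⊗ₜ g) = a ⊗ₜ (h * g) := by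
  have counit_mid : Algebra.TensorProduct.map (AlgHom.id k H) (Q.counitLeft H)
      (Q.PhiInv * (1 ⊗ₜ Q.comul h)) = 1 ⊗ₜ h := by
    rw [map_mul, Q.map_PhiInv_eq_one _ Q.map_counitLeft_Phi]
    simp
  rw [hmulB.apply_tmul_tmul, M.map_actMul_one_right, counit_mid]
  simp [M.smashOrbit_tmul, M.act_one]

theorem apply_one_tmul (hmulB : IsSmashMul Q M mulB) (b : A) (h g : H) :
    mulB (M.one ⊗ₜ h) (b ⊗ₜ g) = M.smashOrbit b (Q.comul h * (1 ⊗ₜ g)) := by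
  have counit_first : Q.counitLeft (H ⊗[k] H) (Q.PhiInv * (1 ⊗ₜ Q.comul h)) = Q.comul h := by
    rw [map_mul, Q.map_PhiInv_eq_one _ Q.counitLeft_Phi]
    simp
  rw [hmulB.apply_tmul_tmul, M.map_actMul_one_left, counit_first]

theorem apply_smashOrbit_one (hmulB : IsSmashMul Q M mulB) (a : A) (t : H ⊗[k] H) (g : H) :
    mulB (M.smashOrbit a t) (M.one ⊗ₜ g) = M.smashOrbit a (t * (1 ⊗ₜ g)) := by
  induction t with
  | zero => simp
  | tmul x y => simp [M.smashOrbit_tmul, hmulB.apply_tmul_one]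
  | add s t hs ht => simp only [map_add, LinearMap.add_apply, add_mul, hs, ht]

theorem apply_one_smashOrbit (hmulB : IsSmashMul Q M mulB) (a : A) (h : H) (t : H ⊗[k] H) :
    mulB (M.one ⊗ₜ h) (M.smashOrbit a t) = M.smashOrbit a (Q.comul h * t) := by
  induction t with
  | zero => simp
  | tmul x y => rw [LeftModuleAlgebra.smashOrbit_tmul, hmulB.apply_one_tmul, M.smashOrbit_act]
  | add s t hs ht => simp only [map_add, mul_add, hs, ht]

end IsSmashMul

end SmashProduct

/-- For `B = A # H` with the canonical map `j(h) = 1_A # h`, the projection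
`E(b) = j(q¹) b₍₀₎ j(βS(q² b₍₁₎))` is given by `E(a # h) = ε(h)(a # 1)`. -/
theorem statement6 {k H A : Type*} [Field k] [Ring H] [Algebra k H]
    [AddCommGroup A] [Module k A] (Q : QuasiHopfAlgebra k H)
    (M : LeftModuleAlgebra Q.toQuasiBialgebra A)
    (mulB : (A ⊗[k] H) →ₗ[k] (A ⊗[k] H) →ₗ[k] (A ⊗[k] H))
    (hmulB : IsSmashMul Q.toQuasiBialgebra M mulB)
    (coactB : (A ⊗[k] H) →ₗ[k] (A ⊗[k] H) ⊗[k] H)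
    (hcoactB : IsSmashCoact Q.toQuasiBialgebra M coactB)
    (E : (A ⊗[k] H) →ₗ[k] A ⊗[k] H)
    (hE : ∀ (b : A ⊗[k] H) (n : ℕ) (X1 X2 X3 : Fin n → H),
      Q.Phi = ∑ i, X1 i ⊗ₜ[k] (X2 i ⊗ₜ[k] X3 i) →
      ∀ (p : ℕ) (b0 : Fin p → A ⊗[k] H) (b1 : Fin p → H),
        coactB b = ∑ j, b0 j ⊗ₜ[k] b1 j →
        E b = ∑ i, ∑ j, mulB (mulB (M.one ⊗ₜ[k] X1 i) (b0 j))
          (M.one ⊗ₜ[k] (Q.beta * Q.S (Q.Sinv (Q.alpha * X3 i) * X2 i * b1 j)))) :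
    ∀ (a : A) (h : H), E (a ⊗ₜ[k] h) = Q.counit h • (a ⊗ₜ[k] (1 : H)) := by
  intro a h
  obtain ⟨n, X1, X2, X3, hX⟩ := exists_sum_tmul_tmul_eq Q.Phi
  obtain ⟨m, y1, y2, y3, hy⟩ := exists_sum_tmul_tmul_eq (Q.PhiInv * (1 ⊗ₜ[k] Q.comul h))
  have hρ : coactB (a ⊗ₜ h) = ∑ j, M.smashOrbit a (y1 j ⊗ₜ y2 j) ⊗ₜ y3 j := by
    simp [hcoactB.apply_tmul, hy]
  have hpR : ∑ j, y1 j ⊗ₜ[k] (y2 j * Q.beta * Q.S (y3 j)) = Q.counit h • Q.pR := by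
    simpa [hy, QuasiHopfAlgebra.pR] using Q.lTensor_betaContract_mul_tmul_comul Q.PhiInv h
  calc E (a ⊗ₜ h)
      = M.smashOrbit a (∑ i, Q.comul (X1 i) * (∑ j, y1 j ⊗ₜ[k] (y2 j * Q.beta * Q.S (y3 j)))
          * (1 ⊗ₜ (Q.S (X2 i) * Q.alpha * X3 i))) := by
        simp [hE _ n X1 X2 X3 hX m _ y3 hρ, hmulB.apply_one_smashOrbit,
          hmulB.apply_smashOrbit_one, Q.S_mul, Q.S_Sinv, Finset.mul_sum, Finset.sum_mul, mul_assoc]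
    _ = M.smashOrbit a (Q.counit h • 1) := by
        simp only [hpR, mul_smul_comm, smul_mul_assoc, ← Finset.smul_sum,
          Q.sum_comul_mul_pR_mul hX]
    _ = Q.counit h • (a ⊗ₜ 1) := by rw [map_smul, M.smashOrbit_one]
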